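/- There exists a sequence q₁(n) with q₁(n) ~ 2^n such that D(n, q₁(n)) ≲ 3n as n → ∞. -/

import Mathlib

open Filter

namespace Rev

/-- A reversible gate `TOF(I; t)` on `N` lines: a control set `I` with `|I| ≤ 2`
and a target `t ∉ I`.  `|I| = 0, 1, 2` correspond to NOT, CNOT, C²NOT. -/
structure Gate (N : ℕ) where
  I : Finset (Fin N)
  t : Fin N
  card_le : I.card ≤ 2
  t_not_mem : t ∉ I

/-- The transformation computed by a gate: the target coordinate is XORed with the
conjunction of the control coordinates (the empty conjunction is `1`). -/
def Gate.apply {N : ℕ} (g : Gate N) (x : Fin N → Bool) : Fin N → Bool :=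
  fun j => if j = g.t then xor (x g.t) (decide (∀ i ∈ g.I, x i = true)) else x j

/-- A reversible circuit: a finite sequence (composition) of gates. -/
abbrev Circuit (N : ℕ) := List (Gate N)

/-- The transformation computed by a circuit (composition of the gate maps). -/
def Circuit.eval {N : ℕ} (S : Circuit N) (x : Fin N → Bool) : Fin N → Bool :=
  S.foldl (fun v g => g.apply v) x

/-- Gate complexity: the number of gates. -/
def Circuit.L {N : ℕ} (S : Circuit N) : ℕ := S.length

/-- The number of NOT and CNOT gates. -/
def Circuit.LC {N : ℕ} (S : Circuit N) : ℕ := (S.filter fun g => g.I.card ≤ 1).length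

/-- The number of C²NOT (Toffoli) gates. -/
def Circuit.LT {N : ℕ} (S : Circuit N) : ℕ := (S.filter fun g => g.I.card = 2).length

/-- The quantum weight, given weights `WC` for NOT/CNOT gates and `WT` for C²NOT gates. -/
noncomputable def Circuit.W {N : ℕ} (WC WT : ℝ) (S : Circuit N) : ℝ :=
  WC * S.LC + WT * S.LT

/-- A circuit has depth one if the sets `{t} ∪ I` of its gates are pairwise disjoint. -/
def DepthOne {N : ℕ} (S : Circuit N) : Prop :=
  S.Pairwise fun g₁ g₂ => Disjoint (insert g₁.t g₁.I) (insert g₂.t g₂.I)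

/-- The depth of a circuit: the minimal number of depth-one sub-circuits whose
concatenation is the circuit. -/
noncomputable def Circuit.D {N : ℕ} (S : Circuit N) : ℕ :=
  sInf {d | ∃ parts : List (Circuit N),
    parts.length = d ∧ parts.flatten = S ∧ ∀ p ∈ parts, DepthOne p}

/-- Padding an input vector with zero values on `q` additional inputs. -/
def pad {n q : ℕ} (x : Fin n → Bool) : Fin (n + q) → Bool :=
  fun i => if h : (i : ℕ) < n then x ⟨i, h⟩ else false

/-- A circuit `S` with `n + q` inputs implements `f : 𝔹ⁿ → 𝔹ᵐ` with `q` additional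
inputs: there is a permutation `π` of the output positions such that for every `x`,
applying `S` to `⟨x, 0, …, 0⟩` and permuting the coordinates by `π` yields a vector
whose first `m` coordinates equal `f x`. -/
def Implements {n q m : ℕ} (S : Circuit (n + q)) (f : (Fin n → Bool) → Fin m → Bool) :
    Prop :=
  m ≤ n + q ∧ ∃ π : Equiv.Perm (Fin (n + q)), ∀ x : Fin n → Bool, ∀ j : Fin m,
    ∀ hj : (j : ℕ) < n + q, Circuit.eval S (pad x) (π ⟨j, hj⟩) = f x j

/-- `f ∈ F(n, q)`: `f : 𝔹ⁿ → 𝔹ⁿ` is implementable with `q` additional inputs. -/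
def Implementable (n q : ℕ) (f : (Fin n → Bool) → Fin n → Bool) : Prop :=
  ∃ S : Circuit (n + q), Implements S f

/-- `L(f, q)`: minimal gate complexity of a circuit implementing `f` with `q`
additional inputs. -/
noncomputable def Lmin (n q : ℕ) (f : (Fin n → Bool) → Fin n → Bool) : ℕ :=
  sInf {l | ∃ S : Circuit (n + q), Implements S f ∧ S.L = l}

/-- The Shannon gate complexity function `L(n, q)`. -/
noncomputable def Lsh (n q : ℕ) : ℕ :=
  sSup {l | ∃ f, Implementable n q f ∧ Lmin n q f = l}

/-- `D(f, q)`: minimal depth of a circuit implementing `f` with `q` additional inputs. -/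
noncomputable def Dmin (n q : ℕ) (f : (Fin n → Bool) → Fin n → Bool) : ℕ :=
  sInf {d | ∃ S : Circuit (n + q), Implements S f ∧ S.D = d}

/-- The Shannon depth function `D(n, q)`. -/
noncomputable def Dsh (n q : ℕ) : ℕ :=
  sSup {d | ∃ f, Implementable n q f ∧ Dmin n q f = d}

/-- `W(f, q)`: minimal quantum weight of a circuit implementing `f` with `q`
additional inputs. -/
noncomputable def Wmin (WC WT : ℝ) (n q : ℕ) (f : (Fin n → Bool) → Fin n → Bool) : ℝ :=
  sInf {w | ∃ S : Circuit (n + q), Implements S f ∧ Circuit.W WC WT S = w}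

/-- The Shannon quantum weight function `W(n, q)`. -/
noncomputable def Wsh (WC WT : ℝ) (n q : ℕ) : ℝ :=
  sSup {w | ∃ f, Implementable n q f ∧ Wmin WC WT n q f = w}

/-- `a ~ b`: `a n / b n → 1`. -/
def AsympEquiv (a b : ℕ → ℝ) : Prop :=
  Tendsto (fun n => a n / b n) atTop (nhds 1)

/-- `a ≲ b`: `limsup (a n / b n) ≤ 1`. -/
def AsympLE (a b : ℕ → ℝ) : Prop :=
  Filter.limsup (fun n => a n / b n) atTop ≤ 1

/-- A growing function: nondecreasing and tending to `+∞`. -/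
def Growing (φ : ℕ → ℝ) : Prop :=
  Monotone φ ∧ Tendsto φ atTop atTop

/-- `2 ^ (n - ⌈n / φ(n)⌉)` as a real number. -/
noncomputable def pow2e (φ : ℕ → ℝ) (n : ℕ) : ℝ :=
  (2 : ℝ) ^ ((n : ℤ) - ⌈(n : ℝ) / φ n⌉)

end Rev

/-!
Split the `n` variables into `x` (about `log n` of them) and `y`. In algebraic normal form every
output bit is `∑ B, (∏ i ∈ B, y i) * h_B(x)`, where `h_B` is a sum of monomials in `x`.

* All monomials in `x` are computed in depth `O(log² n)` and cut into a bounded number of groups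
  of `s ≤ n / 4` monomials. All subset sums within each group are tabulated in depth `2s + o(n)`,
  so that each `h_B` is a sum of boundedly many table entries.
* Copying lines by repeated doubling, depth `n` suffices to provide one `y`-variable and enough
  table entries for each pair of an output bit and a set `B`. A copied table entry serves several
  sums, in different layers, so the number of copies stays at `O(n * 2 ^ |y|)`.
* The variables `y` are then eliminated one after another, each by a single layer
  `h_B ↦ h_B + y_a * h_{B ∪ {a}}` over all `B` whose elements precede `a`.

The total depth is `2s + n + |y| + o(n) ≤ 5n / 2 + o(n)`, below `3n` for large `n`.
-/

namespace Rev

open Function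

variable {ι ι' κ κ' κ'' R : Type*} [CommSemiring R]

/-! ### Layers of disjoint gates -/

/-- `LayerStep v w`: a depth-one circuit turns the line contents `v` into `w`. The set `T` collects
the targets of its gates and `c i` is the control set of the gate with target `i ∈ T`. The lines
carry elements of a commutative semiring `R`; for `R = X → Bool`, with Mathlib's ring structure
on `Bool` (addition is `xor`, multiplication is `and`), a line carries a Boolean function of the
circuit input. -/
def LayerStep (v w : ι → R) : Prop :=
  ∃ (T : Set ι) (c : ι → Finset ι), (∀ i ∈ T, (c i).card ≤ 2) ∧ (∀ i ∈ T, ∀ j ∈ c i, j ∉ T) ∧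
    T.PairwiseDisjoint c ∧ w = v + T.indicator fun i => ∏ j ∈ c i, v j

/-- `ReachIn d v w`: the line contents `w` are obtained from `v` by `d` successive layers. -/
inductive ReachIn : ℕ → (ι → R) → (ι → R) → Prop
  | refl (v : ι → R) : ReachIn 0 v v
  | tail {d : ℕ} {u v w : ι → R} : ReachIn d u v → LayerStep v w → ReachIn (d + 1) u w

theorem ReachIn.trans {d e : ℕ} {u v w : ι → R} (huv : ReachIn d u v) (hvw : ReachIn e v w) :
    ReachIn (d + e) u w := by
  induction hvw with
  | refl => exact huv
  | tail _ hstep ih => exact (ih huv).tail hstep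

theorem LayerStep.extend {v w : ι → R} (h : LayerStep v w) {e : ι → ι'} (he : Injective e)
    {v' : ι' → R} (hv : v' ∘ e = v) : LayerStep v' (Function.extend e w v') := by
  obtain ⟨T, c, hcard, hctrl, hdisj, rfl⟩ := h
  let c' : ι' → Finset ι' := Function.extend e (fun i => (c i).map ⟨e, he⟩) fun _ => ∅
  have hc' (i : ι) : c' (e i) = (c i).map ⟨e, he⟩ := he.extend_apply _ _ i
  refine ⟨e '' T, c', ?_, ?_, ?_, ?_⟩
  · rintro _ ⟨i, hi, rfl⟩
    simpa [hc'] using hcard i hi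
  · rintro _ ⟨i, hi, rfl⟩
    simpa [hc', -Set.mem_image, he.mem_set_image] using hctrl i hi
  · rintro _ ⟨i, hi, rfl⟩ _ ⟨j, hj, rfl⟩ hij
    simpa [onFun, hc'] using hdisj hi hj (ne_of_apply_ne e hij)
  · subst hv
    funext i'
    by_cases hi' : ∃ i, e i = i'
    · obtain ⟨i, rfl⟩ := hi'
      by_cases hi : i ∈ T <;> simp [he.extend_apply, hc', he.mem_set_image, hi]
    · have himage : i' ∉ e '' T := fun ⟨i, _, hi⟩ => hi' ⟨i, hi⟩
      simp [extend_apply' _ _ _ hi', himage]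

theorem extend_eq_of_comp_eq {β : Type*} {e : ι → ι'} (he : Injective e) {v : ι → β} {v' : ι' → β}
    (hv : v' ∘ e = v) : Function.extend e v v' = v' := by
  subst hv
  funext i'
  by_cases hi' : ∃ i, e i = i'
  · obtain ⟨i, rfl⟩ := hi'
    exact he.extend_apply _ _ i
  · exact extend_apply' _ _ _ hi'

theorem ReachIn.extend {d : ℕ} {v w : ι → R} (h : ReachIn d v w) {e : ι → ι'} (he : Injective e)
    {v' : ι' → R} (hv : v' ∘ e = v) : ReachIn d v' (Function.extend e w v') := by
  induction h with
  | refl => exact (extend_eq_of_comp_eq he hv).symm ▸ ReachIn.refl v'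
  | @tail d u v w _ hstep ih =>
    have hext : Function.extend e w (Function.extend e v v') = Function.extend e w v' := by
      funext i'
      by_cases hi' : ∃ i, e i = i'
      · obtain ⟨i, rfl⟩ := hi'
        simp only [he.extend_apply]
      · simp only [extend_apply' _ _ _ hi']
    exact hext ▸ (ih hv).tail (hstep.extend he (extend_comp he _ _))

/-! ### Computations with fresh zero lines -/

/-- `Computes d q F G`: from lines carrying `F` and at most `q` further lines carrying `0`, at most
`d` layers lead to a state in which distinct lines carry the entries of `G`. -/
def Computes (d q : ℕ) (F : κ → R) (G : κ' → R) : Prop :=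
  ∃ (A : Type) (_ : Fintype A) (e : ℕ) (w : κ ⊕ A → R) (out : κ' → κ ⊕ A),
    Fintype.card A ≤ q ∧ e ≤ d ∧ ReachIn e (Sum.elim F 0) w ∧ Injective out ∧ w ∘ out = G

namespace Computes

variable {d d' q q' : ℕ} {F : κ → R} {G : κ' → R} {H : κ'' → R}

theorem of_reachIn {T : Type} [Fintype T] {V : T → R}
    (h : ReachIn d (Sum.elim F 0) (Sum.elim F V)) :
    Computes d (Fintype.card T) F (Sum.elim F V) :=
  ⟨T, inferInstance, d, _, id, le_rfl, le_rfl, h, injective_id, rfl⟩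

theorem mono (h : Computes d q F G) (hd : d ≤ d') (hq : q ≤ q') : Computes d' q' F G :=
  let ⟨A, hA, e, w, out, hcard, he, h⟩ := h
  ⟨A, hA, e, w, out, hcard.trans hq, he.trans hd, h⟩

theorem reindex (h : Computes d q F G) {g : κ'' → κ'} (hg : Injective g) (hH : G ∘ g = H) :
    Computes d q F H := by
  obtain ⟨A, hA, e, w, out, hcard, he, hw, hout, rfl⟩ := h
  exact ⟨A, hA, e, w, out ∘ g, hcard, he, hw, hout.comp hg, hH⟩

theorem trans (hFG : Computes d q F G) (hGH : Computes d' q' G H) :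
    Computes (d + d') (q + q') F H := by
  obtain ⟨A, _, e, w, out, hcard, he, hw, hout, rfl⟩ := hFG
  obtain ⟨A', _, e', w', out', hcard', he', hw', hout', rfl⟩ := hGH
  let i₁ : κ ⊕ A → κ ⊕ (A ⊕ A') := Sum.map id Sum.inl
  have hi₁ : Injective i₁ := injective_id.sumMap Sum.inl_injective
  have hfresh (k : κ ⊕ A) (a : A') : i₁ k ≠ Sum.inr (Sum.inr a) := by cases k <;> simp [i₁]
  let i₂ : κ' ⊕ A' → κ ⊕ (A ⊕ A') := Sum.elim (i₁ ∘ out) (Sum.inr ∘ Sum.inr)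
  have hi₂ : Injective i₂ :=
    (hi₁.comp hout).sumElim (Sum.inr_injective.comp Sum.inr_injective) fun k => hfresh (out k)
  have reach₁ := hw.extend hi₁ (v' := Sum.elim F 0) (by rw [Sum.elim_comp_map]; rfl)
  have reach₂ := hw'.extend hi₂ (v' := Function.extend i₁ w (Sum.elim F 0)) <| by
    funext k
    rcases k with k | a
    · simp [i₂, hi₁.extend_apply]
    · exact extend_apply' _ _ _ fun ⟨k, hk⟩ => hfresh k a hk
  refine ⟨A ⊕ A', inferInstance, e + e', _, i₂ ∘ out', ?_, Nat.add_le_add he he',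
    reach₁.trans reach₂, hi₂.comp hout', ?_⟩
  · simpa using Nat.add_le_add hcard hcard'
  · rw [← comp_assoc, extend_comp hi₂]

end Computes

/-! ### From layers to circuits -/

theorem prod_bool_eq_decide (s : Finset ι) (x : ι → Bool) :
    ∏ i ∈ s, x i = decide (∀ i ∈ s, x i = true) := by
  classical
  induction s using Finset.induction_on with
  | empty => rfl
  | insert a s ha ih => simp [Finset.prod_insert ha, ih, Bool.mul_eq_and]

theorem Gate.apply_target {N : ℕ} (g : Gate N) (v : Fin N → Bool) :
    g.apply v g.t = v g.t + ∏ i ∈ g.I, v i := by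
  simp [Gate.apply, prod_bool_eq_decide, Bool.add_eq_xor]

theorem Gate.apply_of_ne {N : ℕ} (g : Gate N) (v : Fin N → Bool) {i : Fin N} (hi : i ≠ g.t) :
    g.apply v i = v i :=
  if_neg hi

theorem Circuit.eval_of_forall_ne {N : ℕ} {S : Circuit N} {i : Fin N} (hi : ∀ g ∈ S, i ≠ g.t)
    (v : Fin N → Bool) : S.eval v i = v i := by
  induction S generalizing v with
  | nil => rfl
  | cons g S ih =>
    rw [List.forall_mem_cons] at hi
    exact (ih hi.2 _).trans (g.apply_of_ne v hi.1)

theorem DepthOne.eval_target {N : ℕ} {S : Circuit N} (hS : DepthOne S) {g : Gate N} (hg : g ∈ S)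
    (v : Fin N → Bool) : S.eval v g.t = v g.t + ∏ i ∈ g.I, v i := by
  induction S generalizing v with
  | nil => simp at hg
  | cons g₀ S ih =>
    obtain ⟨hdisj, hS⟩ := List.pairwise_cons.1 hS
    have hne (g' : Gate N) (hg' : g' ∈ S) (i : Fin N) (hi : i ∈ insert g'.t g'.I) : i ≠ g₀.t :=
      fun h => Finset.disjoint_left.1 (hdisj g' hg') (Finset.mem_insert_self _ _) (h ▸ hi)
    change Circuit.eval S (g₀.apply v) g.t = _
    rcases List.mem_cons.1 hg with rfl | hg
    · rw [Circuit.eval_of_forall_ne fun g' hg' => (hne g' hg' _ (Finset.mem_insert_self _ _)).symm,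
        g.apply_target]
    · rw [ih hS hg, g₀.apply_of_ne v (hne g hg _ (Finset.mem_insert_self _ _)),
        Finset.prod_congr rfl fun i hi =>
          g₀.apply_of_ne v (hne g hg i (Finset.mem_insert_of_mem hi))]

theorem LayerStep.exists_circuit {X : Type*} {N : ℕ} {v w : Fin N → X → Bool}
    (h : LayerStep v w) :
    ∃ S : Circuit N, DepthOne S ∧ ∀ x, S.eval (fun i => v i x) = fun i => w i x := by
  classical
  obtain ⟨T, c, hcard, hctrl, hdisj, rfl⟩ := h
  let gate (i : T) : Gate N := ⟨c i, i, hcard i i.2, fun hi => hctrl i i.2 i hi i.2⟩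
  let S : Circuit N := (Finset.univ : Finset T).toList.map gate
  have hS : DepthOne S := by
    refine List.pairwise_map.2 <| (Finset.nodup_toList _).imp fun {i j} hij => ?_
    have hij' : (i : Fin N) ≠ j := Subtype.coe_ne_coe.2 hij
    simp only [gate, Finset.disjoint_insert_left, Finset.disjoint_insert_right, Finset.mem_insert,
      not_or]
    exact ⟨⟨hij'.symm, fun hj => hctrl i i.2 j hj j.2⟩, fun hi => hctrl j j.2 i hi i.2,
      hdisj i.2 j.2 hij'⟩
  refine ⟨S, hS, fun x => funext fun i => ?_⟩
  by_cases hi : i ∈ T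
  · have hmem : gate ⟨i, hi⟩ ∈ S := List.mem_map_of_mem (by simp)
    simpa [hi] using hS.eval_target hmem fun i => v i x
  · have hne : ∀ g ∈ S, i ≠ g.t := by
      simp only [S, List.mem_map]
      rintro _ ⟨j, -, rfl⟩ rfl
      exact hi j.2
    simp [Circuit.eval_of_forall_ne hne, hi]

theorem ReachIn.exists_parts {X : Type*} {N d : ℕ} {v w : Fin N → X → Bool}
    (h : ReachIn d v w) :
    ∃ parts : List (Circuit N), parts.length = d ∧ (∀ p ∈ parts, DepthOne p) ∧
      ∀ x, Circuit.eval parts.flatten (fun i => v i x) = fun i => w i x := by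
  induction h with
  | refl v => exact ⟨[], rfl, by simp, fun x => rfl⟩
  | tail _ hstep ih =>
    obtain ⟨parts, hlength, hparts, heval⟩ := ih
    obtain ⟨S, hS, hSeval⟩ := hstep.exists_circuit
    refine ⟨parts ++ [S], by simp [hlength], ?_, fun x => ?_⟩
    · simpa [or_imp, forall_and] using ⟨hparts, hS⟩
    · simp only [Circuit.eval] at heval hSeval ⊢
      simp [heval, hSeval]

theorem exists_perm_extend_castLE {N n : ℕ} (hn : n ≤ N) {o : Fin n → Fin N} (ho : Injective o) :
    ∃ π : Equiv.Perm (Fin N), ∀ j, π (Fin.castLE hn j) = o j := by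
  classical
  let e : Set.range (Fin.castLE hn) ≃ Set.range o :=
    (Equiv.ofInjective _ (Fin.castLE_injective hn)).symm.trans (Equiv.ofInjective o ho)
  refine ⟨e.extendSubtype, fun j => ?_⟩
  rw [e.extendSubtype_apply_of_mem _ (Set.mem_range_self j)]
  have hj : (Equiv.ofInjective _ (Fin.castLE_injective hn)).symm ⟨_, Set.mem_range_self j⟩ = j :=
    Equiv.ofInjective_symm_apply _ j
  simp [e, hj]

theorem Computes.dmin_le {n d q : ℕ} {f : (Fin n → Bool) → Fin n → Bool}
    (h : Computes d q (fun i (x : Fin n → Bool) => x i) fun j x => f x j) : Dmin n q f ≤ d := by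
  obtain ⟨A, _, e, w, out, hcard, he, hw, hout, hf⟩ := h
  obtain ⟨a⟩ : Nonempty (A ↪ Fin q) :=
    Function.Embedding.nonempty_of_card_le (by simpa using hcard)
  let line : Fin n ⊕ A → Fin (n + q) := finSumFinEquiv ∘ Sum.map id a
  have hline : Injective line :=
    finSumFinEquiv.injective.comp (injective_id.sumMap a.injective)
  have hpad : (fun i x => pad x i) ∘ line = Sum.elim (fun i (x : Fin n → Bool) => x i) 0 := by
    funext i x
    rcases i with i | i <;> simp [line, pad, Bool.zero_eq_false]
  obtain ⟨parts, hlength, hparts, heval⟩ := (hw.extend hline hpad).exists_parts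
  obtain ⟨π, hπ⟩ := exists_perm_extend_castLE (n.le_add_right q) (hline.comp hout)
  have hI : Implements (q := q) parts.flatten f := by
    refine ⟨n.le_add_right q, π, fun x j hj => ?_⟩
    rw [heval, show (⟨j, hj⟩ : Fin (n + q)) = Fin.castLE (n.le_add_right q) j from rfl, hπ]
    simpa [hline.extend_apply] using congrFun (congrFun hf j) x
  calc Dmin n q f ≤ Circuit.D parts.flatten := Nat.sInf_le ⟨_, hI, rfl⟩
    _ ≤ e := Nat.sInf_le ⟨parts, hlength, rfl, hparts⟩
    _ ≤ d := he

theorem dsh_le_of_computes {n d q : ℕ}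
    (h : ∀ f : (Fin n → Bool) → Fin n → Bool,
      Computes d q (fun i (x : Fin n → Bool) => x i) fun j x => f x j) :
    Dsh n q ≤ d := by
  refine csSup_le' ?_
  rintro _ ⟨f, _, rfl⟩
  exact (h f).dmin_le

/-! ### Layers that write to a block of lines -/

section Block

variable {T : Type*} {F : κ → R} {V : T → R}

theorem LayerStep.sumElim {D : Set T} {c : T → Finset (κ ⊕ T)} (hcard : ∀ t ∈ D, (c t).card ≤ 2)
    (hctrl : ∀ t ∈ D, ∀ t' ∈ D, Sum.inr t' ∉ c t) (hdisj : D.PairwiseDisjoint c) :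
    LayerStep (Sum.elim F V)
      (Sum.elim F (V + D.indicator fun t => ∏ j ∈ c t, Sum.elim F V j)) := by
  refine ⟨Sum.inr '' D, Sum.elim (fun _ => ∅) c, ?_, ?_, ?_, ?_⟩
  · rintro _ ⟨t, ht, rfl⟩
    exact hcard t ht
  · rintro _ ⟨t, ht, rfl⟩ _ hj ⟨t', ht', rfl⟩
    exact hctrl t ht t' ht' hj
  · rintro _ ⟨t, ht, rfl⟩ _ ⟨t', ht', rfl⟩ hne
    exact hdisj ht ht' (ne_of_apply_ne Sum.inr hne)
  · funext i
    rcases i with k | t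
    · simp
    · by_cases ht : t ∈ D <;> simp [Sum.inr_injective.mem_set_image, ht]

theorem LayerStep.copy {D : Set T} {src : T → κ ⊕ T} (hinj : D.InjOn src)
    (hsrc : ∀ t ∈ D, ∀ t' ∈ D, src t ≠ Sum.inr t') :
    LayerStep (Sum.elim F V) (Sum.elim F (V + D.indicator fun t => Sum.elim F V (src t))) := by
  simpa using LayerStep.sumElim (F := F) (V := V) (c := fun t => {src t}) (by simp)
    (by simpa [eq_comm] using hsrc)
    fun t ht t' ht' hne => Finset.disjoint_singleton.2 (hinj.ne ht ht' hne)

theorem LayerStep.toffoli {D : Set T} {src₁ src₂ : T → κ ⊕ T} (hinj₁ : D.InjOn src₁)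
    (hinj₂ : D.InjOn src₂) (hne : ∀ t ∈ D, ∀ t' ∈ D, src₁ t ≠ src₂ t')
    (hsrc₁ : ∀ t ∈ D, ∀ t' ∈ D, src₁ t ≠ Sum.inr t')
    (hsrc₂ : ∀ t ∈ D, ∀ t' ∈ D, src₂ t ≠ Sum.inr t') :
    LayerStep (Sum.elim F V) (Sum.elim F (V + D.indicator fun t =>
      Sum.elim F V (src₁ t) * Sum.elim F V (src₂ t))) := by
  classical
  convert LayerStep.sumElim (F := F) (V := V) (D := D) (c := fun t => {src₁ t, src₂ t})
    (fun _ _ => Finset.card_le_two) ?_ ?_ using 3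
  · exact Set.indicator_congr fun t ht => (Finset.prod_pair (hne t ht t ht)).symm
  · intro t ht t' ht'
    simpa [eq_comm] using And.intro (hsrc₁ t ht t' ht') (hsrc₂ t ht t' ht')
  · intro t ht t' ht' htt'
    simpa [onFun] using ⟨⟨hinj₁.ne ht' ht htt'.symm, hne t' ht' t ht⟩,
      (hne t ht t' ht').symm, hinj₂.ne ht' ht htt'.symm⟩

end Block

/-! ### Copying and summing -/

theorem computes_one (F : κ → R) : Computes 1 1 F (Sum.elim F fun _ : Unit => 1) := by
  refine Computes.of_reachIn ((ReachIn.refl _).tail ?_)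
  convert LayerStep.sumElim (F := F) (V := (0 : Unit → R)) (D := Set.univ) (c := fun _ => ∅)
    (by simp) (by simp) (by simp [Set.PairwiseDisjoint, Set.Pairwise]) using 2
  simp

theorem computes_mul {T : Type} [Fintype T] (F : κ → R) {φ ψ : T → κ} (hφ : Injective φ)
    (hψ : Injective ψ) (hne : ∀ t t', φ t ≠ ψ t') :
    Computes 1 (Fintype.card T) F (Sum.elim F fun t => F (φ t) * F (ψ t)) := by
  refine Computes.of_reachIn ((ReachIn.refl _).tail ?_)
  convert LayerStep.toffoli (F := F) (V := (0 : T → R)) (D := Set.univ)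
    (src₁ := Sum.inl ∘ φ) (src₂ := Sum.inl ∘ ψ) (Sum.inl_injective.comp hφ).injOn
    (Sum.inl_injective.comp hψ).injOn (by simpa using hne) (by simp) (by simp) using 2
  simp

theorem exists_equiv_sigma_fin {T E : Type*} [Finite T] (φ : T → E) :
    ∃ (N : E → ℕ) (e : T ≃ Σ x, Fin (N x)), ∀ t, (e t).1 = φ t :=
  ⟨_, (Equiv.sigmaFiberEquiv φ).symm.trans (Equiv.sigmaCongrRight fun _ => Finite.equivFin _),
    fun _ => rfl⟩

-- The original line has number `0` and copy `r` has number `r + 1`; the layer fills the numbers in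
-- `[2 ^ k, 2 ^ (k + 1))`, each from the line whose number is smaller by `2 ^ k`.
theorem LayerStep.copy_doubling {E : Type*} (F : κ → R) {v : E → κ} (hv : Injective v)
    (N : E → ℕ) (k : ℕ) :
    LayerStep
      (Sum.elim F fun t : Σ x, Fin (N x) => if (t.2 : ℕ) + 1 < 2 ^ k then F (v t.1) else 0)
      (Sum.elim F fun t => if (t.2 : ℕ) + 1 < 2 ^ (k + 1) then F (v t.1) else 0) := by
  let src (t : Σ x, Fin (N x)) : κ ⊕ Σ x, Fin (N x) :=
    if (t.2 : ℕ) + 1 = 2 ^ k then Sum.inl (v t.1)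
    else Sum.inr ⟨t.1, t.2 - 2 ^ k, (Nat.sub_le _ _).trans_lt t.2.2⟩
  have hpow : 2 ^ (k + 1) = 2 ^ k * 2 := pow_succ 2 k
  convert LayerStep.copy (src := src)
    (D := {t | 2 ^ k ≤ (t.2 : ℕ) + 1 ∧ (t.2 : ℕ) + 1 < 2 ^ (k + 1)}) ?_ ?_ using 2
  · funext ⟨x, r⟩
    simp only [src, Pi.add_apply, Set.indicator_apply, Set.mem_ofPred_eq]
    rcases lt_trichotomy ((r : ℕ) + 1) (2 ^ k) with h | h | h
    · simp [h, h.not_ge, h.trans (Nat.pow_lt_pow_succ one_lt_two)]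
    · simp [h, hpow]
    · have hr : (r : ℕ) - 2 ^ k + 1 < 2 ^ k ↔ (r : ℕ) + 1 < 2 ^ (k + 1) := by omega
      by_cases hlt : (r : ℕ) + 1 < 2 ^ (k + 1) <;> simp [h.ne', h.le, h.not_gt, hr, hlt]
  · rintro ⟨x, r⟩ ⟨hr, -⟩ ⟨x', r'⟩ ⟨hr', -⟩ h
    dsimp only at hr hr'
    dsimp only [src] at h
    split_ifs at h with heq heq'
    · obtain rfl := hv (Sum.inl_injective h)
      obtain rfl : r = r' := Fin.ext (by omega)
      rfl
    · obtain ⟨rfl, h⟩ := Sigma.mk.inj (Sum.inr_injective h)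
      have := Fin.mk.inj (eq_of_heq h)
      obtain rfl : r = r' := Fin.ext (by omega)
      rfl
  · rintro ⟨x, r⟩ ⟨-, hr⟩ ⟨x', r'⟩ ⟨hr', -⟩ h
    dsimp only at hr hr'
    dsimp only [src] at h
    split_ifs at h
    obtain ⟨rfl, h⟩ := Sigma.mk.inj (Sum.inr_injective h)
    have := congrArg Fin.val (eq_of_heq h)
    dsimp only at this
    omega

theorem computes_fanout_sigma {E : Type} [Fintype E] (F : κ → R) {v : E → κ} (hv : Injective v)
    (N : E → ℕ) {L : ℕ} (hN : ∀ x, N x < 2 ^ L) :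
    Computes L (Fintype.card (Σ x, Fin (N x))) F
      (Sum.elim F fun t : Σ x, Fin (N x) => F (v t.1)) := by
  have hreach (k : ℕ) : ReachIn k (Sum.elim F 0) (Sum.elim F fun t : Σ x, Fin (N x) =>
      if (t.2 : ℕ) + 1 < 2 ^ k then F (v t.1) else 0) := by
    induction k with
    | zero => convert ReachIn.refl (Sum.elim F 0) using 3; simp
    | succ k ih => exact ih.tail (LayerStep.copy_doubling F hv N k)
  convert Computes.of_reachIn (hreach L) using 3 with t
  exact (if_pos ((Nat.succ_le_of_lt t.2.2).trans_lt (hN t.1))).symm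

theorem computes_fanout {T : Type} [Fintype T] (F : κ → R) (φ : T → κ) {L : ℕ}
    (hL : Fintype.card T < 2 ^ L) :
    Computes L (Fintype.card T) F (Sum.elim F fun t => F (φ t)) := by
  classical
  let fiber : T → Quotient (Setoid.ker φ) := Quotient.mk _
  obtain ⟨N, e, he⟩ := exists_equiv_sigma_fin fiber
  have hN (x) : N x < 2 ^ L := by
    refine lt_of_le_of_lt ?_ hL
    simpa using Fintype.card_le_of_injective (fun r : Fin (N x) => e.symm ⟨x, r⟩)
      (e.symm.injective.comp sigma_mk_injective)
  rw [Fintype.card_congr e]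
  refine (computes_fanout_sigma F (Setoid.kerLift_injective φ) N hN).reindex
    (injective_id.sumMap e.injective) ?_
  rw [Sum.elim_comp_map, comp_id]
  congr 1
  funext t
  simp [he, fiber]

theorem computes_sum_indicator {I T : Type} [Fintype I] [Fintype T] (F : κ → R) {D : I → Set T}
    {src : I → T → κ} (hinj : ∀ i, (D i).InjOn (src i)) :
    Computes (Fintype.card I) (Fintype.card T) F
      (Sum.elim F (∑ i, (D i).indicator (F ∘ src i))) := by
  classical
  have hreach (S : Finset I) : ReachIn S.card (Sum.elim F 0)
      (Sum.elim F (∑ i ∈ S, (D i).indicator (F ∘ src i))) := by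
    induction S using Finset.induction_on with
    | empty => exact ReachIn.refl _
    | insert i S hi ih =>
      rw [Finset.card_insert_of_notMem hi, Finset.sum_insert hi, add_comm ((D i).indicator _)]
      exact ih.tail (LayerStep.copy (src := Sum.inl ∘ src i)
        (Sum.inl_injective.comp_injOn (hinj i)) (by simp))
  exact Computes.of_reachIn (hreach Finset.univ)

/-! ### Monomials, partial sums and products -/

theorem computes_monomials_insert {α : Type} [DecidableEq α] (F : κ → R) (v : α → κ)
    {S : Finset α} {a : α} :
    Computes (S.card + 1 + 1) (2 ^ S.card + 2 ^ S.card)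
      (Sum.elim F fun A : S.powerset => ∏ i ∈ A.1, F (v i))
      (Sum.elim F fun B : (insert a S).powerset => ∏ i ∈ B.1, F (v i)) := by
  let M (A : S.powerset) : R := ∏ i ∈ A.1, F (v i)
  have hcard : Fintype.card S.powerset = 2 ^ S.card := by simp
  have hfan := computes_fanout (T := S.powerset) (Sum.elim F M) (fun _ => Sum.inl (v a))
    (L := S.card + 1) (by rw [hcard]; exact Nat.pow_lt_pow_succ one_lt_two)
  have hmul := computes_mul (T := S.powerset) (Sum.elim (Sum.elim F M) fun _ => F (v a))
    (φ := Sum.inr) (ψ := Sum.inl ∘ Sum.inr) Sum.inr_injective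
    (Sum.inl_injective.comp Sum.inr_injective) (by simp)
  rw [hcard] at hfan hmul
  have herase (B : (insert a S).powerset) : B.1.erase a ∈ S.powerset :=
    Finset.mem_powerset.2 (Finset.subset_insert_iff.1 (Finset.mem_powerset.1 B.2))
  let g : κ ⊕ (insert a S).powerset → ((κ ⊕ S.powerset) ⊕ S.powerset) ⊕ S.powerset :=
    Sum.elim (Sum.inl ∘ Sum.inl ∘ Sum.inl) fun B =>
      if a ∈ B.1 then Sum.inr ⟨B.1.erase a, herase B⟩
      else Sum.inl (Sum.inl (Sum.inr ⟨B.1.erase a, herase B⟩))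
  refine (hfan.trans hmul).reindex (g := g) ?_ ?_
  · refine (Sum.inl_injective.comp (Sum.inl_injective.comp Sum.inl_injective)).sumElim
      (fun B B' h => Subtype.ext ?_) fun k B => by split_ifs <;> simp
    split_ifs at h with hB hB' hB' <;>
      simp only [Sum.inr.injEq, Sum.inl.injEq, Subtype.mk.injEq] at h
    · exact Finset.erase_injOn' a hB hB' h
    · rwa [Finset.erase_eq_of_notMem hB, Finset.erase_eq_of_notMem hB'] at h
  · funext i
    rcases i with k | B
    · rfl
    · by_cases hB : a ∈ B.1
      · simp [g, M, hB, Finset.mul_prod_erase B.1 (fun i => F (v i)) hB]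
      · simp [g, M, hB]

theorem computes_monomials {α : Type} (F : κ → R) (v : α → κ) (S : Finset α) :
    Computes ((S.card + 1) ^ 2) (2 * 2 ^ S.card) F
      (Sum.elim F fun A : S.powerset => ∏ i ∈ A.1, F (v i)) := by
  classical
  induction S using Finset.induction_on with
  | empty =>
    have hempty (A : (∅ : Finset α).powerset) : A.1 = ∅ := by simpa using A.2
    refine ((computes_one F).mono (by simp) (by simp)).reindex (g := Sum.map id fun _ => ())
      (injective_id.sumMap fun A B _ => Subtype.ext ((hempty A).trans (hempty B).symm)) ?_
    rw [Sum.elim_comp_map, comp_id]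
    congr 1
    funext A
    simp [hempty A, comp_def]
  | insert a S ha ih =>
    rw [Finset.card_insert_of_notMem ha]
    refine (ih.trans (computes_monomials_insert F v)).mono ?_ ?_
    · nlinarith
    · rw [pow_succ]
      linarith

theorem computes_subset_sums {Γ σ : Type} [Fintype Γ] [Fintype σ] (F : κ → R)
    (v : Γ × σ → κ) {L : ℕ}
    (hL : Fintype.card σ * (Fintype.card Γ * 2 ^ Fintype.card σ) < 2 ^ L) :
    Computes (L + Fintype.card σ)
      ((Fintype.card σ + 1) * (Fintype.card Γ * 2 ^ Fintype.card σ)) F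
      (Sum.elim F fun p : Γ × Finset σ => ∑ a ∈ p.2, F (v (p.1, a))) := by
  classical
  have hfan := computes_fanout (T := σ × (Γ × Finset σ)) F (fun t => v (t.2.1, t.1)) (L := L)
    (by simpa using hL)
  have hsum := computes_sum_indicator (I := σ) (T := Γ × Finset σ)
    (Sum.elim F fun t : σ × (Γ × Finset σ) => F (v (t.2.1, t.1)))
    (D := fun a => {p | a ∈ p.2}) (src := fun a p => Sum.inr (a, p))
    fun a => (Sum.inr_injective.comp (Prod.mk_right_injective a)).injOn
  refine ((hfan.trans hsum).mono le_rfl ?_).reindex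
    (Sum.inl_injective.sumMap injective_id) ?_
  · simp [add_mul]
  · funext i
    rcases i with k | p
    · rfl
    · simp [Finset.sum_apply, Set.indicator_apply, Finset.sum_ite_mem]

-- Consecutive blocks of `l` requests for the same `x : E` share one copy of `x`, each in its own
-- slot; only the last block of every `x` may be incomplete.
theorem exists_shared_copies {T E : Type} [Fintype T] [Fintype E] (req : T → E) {l : ℕ}
    (hl : 0 < l) :
    ∃ (C : Type) (_ : Fintype C) (φ : C → E) (cp : T → C) (slot : T → Fin l),
      (∀ t, φ (cp t) = req t) ∧ Injective (fun t => (cp t, slot t)) ∧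
      l * Fintype.card C ≤ Fintype.card T + l * Fintype.card E := by
  obtain ⟨N, e, he⟩ := exists_equiv_sigma_fin req
  let share (p : Σ x, Fin (N x)) : (Σ x, Fin (N x / l + 1)) × Fin l :=
    (⟨p.1, p.2 / l, Nat.lt_succ_of_le (Nat.div_le_div_right p.2.2.le)⟩,
      ⟨p.2 % l, Nat.mod_lt _ hl⟩)
  have hshare : Injective share := by
    rintro ⟨x, r⟩ ⟨x', r'⟩ h
    simp only [share, Prod.mk.injEq, Fin.mk.injEq] at h
    obtain ⟨rfl, hdiv⟩ := Sigma.mk.inj h.1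
    have hr : (r : ℕ) = r' := by
      rw [← Nat.div_add_mod (r : ℕ) l, Fin.mk.inj (eq_of_heq hdiv), h.2, Nat.div_add_mod]
    rw [Fin.ext hr]
  refine ⟨Σ x, Fin (N x / l + 1), inferInstance, Sigma.fst, fun t => (share (e t)).1,
    fun t => (share (e t)).2, he, hshare.comp e.injective, ?_⟩
  have hblock (x : E) : l * (N x / l + 1) ≤ N x + l := by
    rw [mul_add, mul_one]
    gcongr
    exact Nat.mul_div_le _ _
  calc l * Fintype.card (Σ x, Fin (N x / l + 1)) = ∑ x, l * (N x / l + 1) := by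
        simp [Finset.mul_sum]
    _ ≤ ∑ x, (N x + l) := Finset.sum_le_sum fun x _ => hblock x
    _ = Fintype.card T + l * Fintype.card E := by
        simp [Fintype.card_congr e, Finset.sum_add_distrib, mul_comm]

theorem computes_sum_shared {Γ T : Type} [Fintype Γ] [Fintype T] {l : ℕ} (F : κ → R)
    {cp : Γ × T → κ} {slot : Γ × T → Fin l} (hinj : Injective fun t => (cp t, slot t)) :
    Computes (Fintype.card Γ * l) (Fintype.card T) F
      (Sum.elim F fun t => ∑ g, F (cp (g, t))) := by
  have hsum := computes_sum_indicator (I := Γ × Fin l) (T := T) F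
    (D := fun i => {t | slot (i.1, t) = i.2}) (src := fun i t => cp (i.1, t)) ?_
  · convert hsum using 1
    · simp
    · congr 1
      funext t
      simp [Finset.sum_apply, Set.indicator_apply, Fintype.sum_prod_type]
  · rintro ⟨g, r⟩ t ht t' ht' h
    exact congrArg Prod.snd (hinj (Prod.ext h (ht.trans ht'.symm)))

theorem computes_copies_and_sums {Γ T T' E : Type} [Fintype Γ] [Nonempty Γ] [Fintype T]
    [Fintype T'] [Fintype E] (F : κ → R) (ψ : T' → κ) (tbl : E → κ) (req : Γ × T → E) {L : ℕ}
    (hL : Fintype.card T' + (Fintype.card T + Fintype.card E) < 2 ^ L) :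
    Computes (L + Fintype.card Γ * Fintype.card Γ)
      (Fintype.card T' + (Fintype.card T + Fintype.card E) + Fintype.card T) F
      (Sum.elim (fun t' => F (ψ t')) fun t => ∑ g, F (tbl (req (g, t)))) := by
  obtain ⟨C, _, φ, cp, slot, hφ, hinj, hC⟩ := exists_shared_copies req (l := Fintype.card Γ)
    Fintype.card_pos
  have hcard : Fintype.card C ≤ Fintype.card T + Fintype.card E := by
    refine Nat.le_of_mul_le_mul_left (hC.trans_eq ?_) (Fintype.card_pos (α := Γ))
    rw [Fintype.card_prod, mul_add]
  have hfan := computes_fanout (T := T' ⊕ C) F (Sum.elim ψ (tbl ∘ φ)) (L := L) <| by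
    rw [Fintype.card_sum]
    omega
  have hsum := computes_sum_shared
    (Sum.elim F fun t : T' ⊕ C => F (Sum.elim ψ (tbl ∘ φ) t))
    (cp := fun t => Sum.inr (Sum.inr (cp t))) (slot := slot) fun t t' h => hinj <| by simpa using h
  refine ((hfan.trans hsum).mono le_rfl ?_).reindex
    (g := Sum.map (Sum.inr ∘ Sum.inl) id)
    ((Sum.inr_injective.comp Sum.inl_injective).sumMap injective_id) ?_
  · rw [Fintype.card_sum]
    omega
  · funext t
    rcases t with t' | t
    · rfl
    · simp [hφ]

-- The gate with target `(j, B)` reads the copy of `y a` on the line `(j, insert a B)`. Since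
-- `max (insert a B) = a`, one line per `j` and nonempty set serves the layers of all variables.
theorem LayerStep.eliminate_max {J μ : Type*} [LinearOrder μ] (y : μ → R) (H : J × Finset μ → R)
    {S : Finset μ} {a : μ} (ha : ∀ i ∈ S, i < a) :
    LayerStep (Sum.elim (fun t : J × {B : Finset μ // B.Nonempty} => y (t.2.1.max' t.2.2)) H)
      (Sum.elim (fun t => y (t.2.1.max' t.2.2))
        (H + {t : J × Finset μ | t.2 ⊆ S}.indicator fun t => H (t.1, insert a t.2) * y a)) := by
  have haS {B : Finset μ} (hB : B ⊆ S) : a ∉ B := fun h => (ha a (hB h)).false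
  have hinsert {B B' : Finset μ} (hB : B ⊆ S) (hB' : B' ⊆ S) (h : insert a B = insert a B') :
      B = B' := by
    rw [← Finset.erase_insert (haS hB), h, Finset.erase_insert (haS hB')]
  convert LayerStep.toffoli
    (F := fun t : J × {B : Finset μ // B.Nonempty} => y (t.2.1.max' t.2.2)) (V := H)
    (D := {t : J × Finset μ | t.2 ⊆ S}) (src₁ := fun t => Sum.inr (t.1, insert a t.2))
    (src₂ := fun t => Sum.inl (t.1, ⟨insert a t.2, Finset.insert_nonempty a t.2⟩))
    ?_ ?_ (by simp) ?_ (by simp) using 3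
  · refine Set.indicator_congr fun t ht => ?_
    have hmax : (insert a t.2).max' (Finset.insert_nonempty a t.2) = a :=
      (Finset.max'_eq_iff _ _ _).2 ⟨Finset.mem_insert_self _ _,
        Finset.forall_mem_insert _ _ _ |>.2 ⟨le_rfl, fun i hi => (ha i (ht hi)).le⟩⟩
    simp [hmax]
  · intro t ht t' ht' h
    obtain ⟨hj, hB⟩ := Prod.ext_iff.1 (Sum.inr_injective h)
    exact Prod.ext hj (hinsert ht ht' hB)
  · intro t ht t' ht' h
    obtain ⟨hj, hB⟩ := Prod.ext_iff.1 (Sum.inl_injective h)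
    exact Prod.ext hj (hinsert ht ht' (Subtype.ext_iff.1 hB))
  · intro t _ t' ht' h
    have hB : insert a t.2 = t'.2 := congrArg Prod.snd (Sum.inr_injective h)
    exact haS ht' (hB ▸ Finset.mem_insert_self a t.2)

theorem exists_reachIn_multilinear {J μ : Type*} [LinearOrder μ] (y : μ → R) (H : J × Finset μ → R)
    (S : Finset μ) :
    ∃ H' : J × Finset μ → R,
      ReachIn S.card
        (Sum.elim (fun t : J × {B : Finset μ // B.Nonempty} => y (t.2.1.max' t.2.2)) H)
        (Sum.elim (fun t => y (t.2.1.max' t.2.2)) H') ∧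
      ∀ j, H' (j, ∅) = ∑ B ∈ S.powerset, (∏ i ∈ B, y i) * H (j, B) := by
  induction S using Finset.induction_on_max generalizing H with
  | empty => exact ⟨H, ReachIn.refl _, by simp⟩
  | insert a S ha ih =>
    obtain ⟨H', hreach, hH'⟩ := ih
      (H + {t : J × Finset μ | t.2 ⊆ S}.indicator fun t => H (t.1, insert a t.2) * y a)
    have haS : a ∉ S := fun h => (ha a h).false
    refine ⟨H', ?_, fun j => ?_⟩
    · rw [Finset.card_insert_of_notMem haS, add_comm]
      exact ((ReachIn.refl _).tail (LayerStep.eliminate_max y H ha)).trans hreach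
    · rw [hH', Finset.sum_powerset_insert haS, ← Finset.sum_add_distrib]
      refine Finset.sum_congr rfl fun B hB => ?_
      have hBS : B ⊆ S := Finset.mem_powerset.1 hB
      rw [Finset.prod_insert fun h => haS (hBS h)]
      simp only [Pi.add_apply, Set.indicator_apply, Set.mem_ofPred_eq, hBS, if_true]
      ring

theorem ReachIn.computes {d : ℕ} {v w : κ → R} (h : ReachIn d v w) : Computes d 0 v w :=
  ⟨Empty, inferInstance, d, _, Sum.inl, by simp, le_rfl,
    h.extend Sum.inl_injective (Sum.elim_comp_inl v 0), Sum.inl_injective,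
    extend_comp Sum.inl_injective _ _⟩

theorem computes_multilinear {J μ : Type*} [LinearOrder μ] [Fintype μ] (y : μ → R)
    (H : J × Finset μ → R) :
    Computes (Fintype.card μ) 0
      (Sum.elim (fun t : J × {B : Finset μ // B.Nonempty} => y (t.2.1.max' t.2.2)) H)
      fun j => ∑ B, (∏ i ∈ B, y i) * H (j, B) := by
  obtain ⟨H', hreach, hH'⟩ := exists_reachIn_multilinear y H Finset.univ
  exact hreach.computes.reindex (g := fun j => Sum.inr (j, ∅))
    (Sum.inr_injective.comp (Prod.mk_left_injective ∅)) (funext fun j => by simpa using hH' j)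

theorem sum_sum_filter_equiv {Γ σ β M : Type*} [Fintype Γ] [Fintype σ] [DecidableEq β]
    [AddCommMonoid M] (e : Γ × σ ≃ β) (P : Finset β) (f : β → M) :
    ∑ g, ∑ a with e (g, a) ∈ P, f (e (g, a)) = ∑ b ∈ P, f b := by
  have := Fintype.ofEquiv _ e
  calc ∑ g, ∑ a with e (g, a) ∈ P, f (e (g, a))
      = ∑ p, if e p ∈ P then f (e p) else 0 := by
        simp only [Finset.sum_filter, Fintype.sum_prod_type]
    _ = ∑ b, if b ∈ P then f b else 0 := e.sum_comp fun b => if b ∈ P then f b else 0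
    _ = ∑ b ∈ P, f b := by rw [Finset.sum_ite_mem, Finset.univ_inter]

theorem computes_split_polynomials {α μ J Γ σ : Type} [Fintype α] [Fintype μ] [LinearOrder μ]
    [Fintype J] [Fintype Γ] [Nonempty Γ] [Fintype σ] (e : Γ × σ ≃ Finset α) (x : α → R)
    (y : μ → R) (P : J → Finset μ → Finset (Finset α)) {G s M L₁ L₂ : ℕ}
    (hG : Fintype.card Γ = G) (hs : Fintype.card σ = s)
    (hM : Fintype.card J * 2 ^ Fintype.card μ = M)
    (hL₁ : s * (G * 2 ^ s) < 2 ^ L₁) (hL₂ : M + (M + G * 2 ^ s) < 2 ^ L₂) :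
    Computes
      ((Fintype.card α + 1) ^ 2 + (L₁ + s) + (L₂ + G * G) + Fintype.card μ)
      (2 * 2 ^ Fintype.card α + (s + 1) * (G * 2 ^ s) + (M + (M + G * 2 ^ s) + M))
      (Sum.elim x y) fun j => ∑ B, (∏ i ∈ B, y i) * ∑ A ∈ P j B, ∏ i ∈ A, x i := by
  classical
  subst hG hs hM
  have hmono := (computes_monomials (Sum.elim x y) Sum.inl Finset.univ).reindex
    (g := Sum.map id fun A => ⟨A, by simp⟩) (injective_id.sumMap fun A B h => by simpa using h)
    (H := Sum.elim (Sum.elim x y) fun A => ∏ i ∈ A, x i) (by ext (i | A) <;> rfl)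
  have htable := computes_subset_sums (Sum.elim (Sum.elim x y) fun A => ∏ i ∈ A, x i)
    (fun p => Sum.inr (e p)) hL₁
  have hT : Fintype.card (J × Finset μ) = Fintype.card J * 2 ^ Fintype.card μ := by simp
  have hE : Fintype.card (Γ × Finset σ) = Fintype.card Γ * 2 ^ Fintype.card σ := by simp
  have hT' : Fintype.card (J × {B : Finset μ // B.Nonempty}) ≤
      Fintype.card J * 2 ^ Fintype.card μ := by
    rw [Fintype.card_prod, ← Fintype.card_finset]
    exact Nat.mul_le_mul_left _ (Fintype.card_subtype_le _)
  have hsums := computes_copies_and_sums (T' := J × {B : Finset μ // B.Nonempty})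
    (T := J × Finset μ)
    (Sum.elim (Sum.elim (Sum.elim x y) fun A => ∏ i ∈ A, x i)
      fun p : Γ × Finset σ => ∑ a ∈ p.2, ∏ i ∈ e (p.1, a), x i)
    (fun t => Sum.inl (Sum.inl (Sum.inr (t.2.1.max' t.2.2)))) Sum.inr
    (fun t => (t.1, ({a | e (t.1, a) ∈ P t.2.1 t.2.2} : Finset σ))) (L := L₂)
    (by omega)
  simp only [Sum.elim_inl, Sum.elim_inr, sum_sum_filter_equiv e _ fun A => ∏ i ∈ A, x i]
    at hsums htable
  refine (((hmono.trans htable).trans hsums).trans (computes_multilinear y _)).mono ?_ ?_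
  · simp
  · rw [hT, hE, Finset.card_univ]
    omega

/-! ### Algebraic normal form -/

theorem bool_mul_eq_ite (b c : Bool) : b * c = if c then b else 0 := by
  decide +revert

theorem bool_eq_sum_mul_prod {α : Type*} [Fintype α] [DecidableEq α] (f : (α → Bool) → Bool)
    (x : α → Bool) : f x = ∑ a, f a * ∏ i, (x i + (a i + 1)) := by
  have hprod (a : α → Bool) : ∏ i, (x i + (a i + 1)) = decide (x = a) := by
    have hfactor (b c : Bool) : b + (c + 1) = true ↔ b = c := by decide +revert
    simp only [prod_bool_eq_decide, hfactor, Finset.mem_univ, true_imp_iff, funext_iff]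
  simp [hprod, bool_mul_eq_ite]

theorem exists_bool_eq_sum_prod {α : Type*} [Finite α] (f : (α → Bool) → Bool) :
    ∃ P : Finset (Finset α), ∀ x, f x = ∑ A ∈ P, ∏ i ∈ A, x i := by
  classical
  have := Fintype.ofFinite α
  let coeff (A : Finset α) : Bool := ∑ a, f a * ∏ i ∈ Finset.univ \ A, (a i + 1)
  refine ⟨Finset.univ.filter (coeff ·), fun x => ?_⟩
  calc f x = ∑ a, f a * ∏ i, (x i + (a i + 1)) := bool_eq_sum_mul_prod f x
    _ = ∑ a, ∑ A, (∏ i ∈ A, x i) * (f a * ∏ i ∈ Finset.univ \ A, (a i + 1)) := by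
        simp_rw [Finset.prod_add x, Finset.powerset_univ, Finset.mul_sum, mul_left_comm]
    _ = ∑ A, (∏ i ∈ A, x i) * coeff A := by
        simp only [coeff, Finset.mul_sum]
        exact Finset.sum_comm
    _ = ∑ A with coeff A, ∏ i ∈ A, x i := by simp only [bool_mul_eq_ite, Finset.sum_filter]

theorem exists_bool_eq_sum_prod_mul_sum_prod {α μ : Type*} [Finite α] [Fintype μ]
    (f : (α → Bool) → (μ → Bool) → Bool) :
    ∃ P : Finset μ → Finset (Finset α), ∀ x y,
      f x y = ∑ B, (∏ i ∈ B, y i) * ∑ A ∈ P B, ∏ i ∈ A, x i := by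
  classical
  choose Q hQ using fun x => exists_bool_eq_sum_prod (f x)
  choose P hP using fun B => exists_bool_eq_sum_prod fun x => decide (B ∈ Q x)
  refine ⟨P, fun x y => ?_⟩
  simp only [hQ, ← hP, bool_mul_eq_ite, decide_eq_true_iff, Finset.sum_ite_mem,
    Finset.univ_inter]

/-! ### The Shannon depth function with `2 ^ n` additional inputs -/

theorem computes_of_split {J : Type} [Fintype J] {k m G s M L₁ L₂ : ℕ} (hk : 2 ^ k = G * s)
    (hM : Fintype.card J * 2 ^ m = M) (hL₁ : s * (G * 2 ^ s) < 2 ^ L₁)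
    (hL₂ : M + (M + G * 2 ^ s) < 2 ^ L₂) (f : (Fin (k + m) → Bool) → J → Bool) :
    Computes ((k + 1) ^ 2 + (L₁ + s) + (L₂ + G * G) + m)
      (2 * 2 ^ k + (s + 1) * (G * 2 ^ s) + (M + (M + G * 2 ^ s) + M))
      (fun i (z : Fin (k + m) → Bool) => z i) fun j z => f z j := by
  have : NeZero G := ⟨by rintro rfl; simp at hk⟩
  let e : Fin G × Fin s ≃ Finset (Fin k) := Fintype.equivOfCardEq (by simp [hk])
  choose P hP using fun j => exists_bool_eq_sum_prod_mul_sum_prod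
    fun (x : Fin k → Bool) (y : Fin m → Bool) => f (Fin.append x y) j
  have hinput := (ReachIn.refl fun i (z : Fin (k + m) → Bool) => z i).computes.reindex
    finSumFinEquiv.injective
    (H := Sum.elim (fun i z => z (Fin.castAdd m i)) fun i z => z (Fin.natAdd k i))
    (by ext (i | i) z <;> simp)
  convert hinput.trans (computes_split_polynomials e _ _ P (Fintype.card_fin G)
    (Fintype.card_fin s) (by simpa using hM) hL₁ hL₂) using 1
  · simp
  · simp
  · funext j z
    have happend : Fin.append (fun i => z (Fin.castAdd m i)) (fun i => z (Fin.natAdd k i)) = z :=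
      Fin.append_castAdd_natAdd
    simpa [happend] using hP j (fun i => z (Fin.castAdd m i)) fun i => z (Fin.natAdd k i)

theorem sq_add_le_two_pow {b : ℕ} (hb : 10 ≤ b) : (b + 6) ^ 2 + 1025 ≤ 2 ^ (b + 1) := by
  induction b, hb using Nat.le_induction with
  | base => norm_num
  | succ b _ ih =>
    rw [pow_succ 2 (b + 1)]
    nlinarith

theorem exists_two_pow_mul_four_le_lt_mul_eight {n : ℕ} (hn : 2 ^ 12 ≤ n) :
    ∃ b, 10 ≤ b ∧ 2 ^ b * 4 ≤ n ∧ n < 2 ^ b * 8 := by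
  refine ⟨Nat.log 2 (n / 4), Nat.le_log_of_pow_le one_lt_two (by omega), ?_, ?_⟩
  · have := Nat.pow_log_le_self 2 (x := n / 4) (by omega)
    omega
  · have := Nat.lt_pow_succ_log_self one_lt_two (n / 4)
    omega

theorem four_mul_mul_two_pow_le {k m s : ℕ} (hk : 2 ^ k = 32 * s) (hs : k + m ≤ 8 * s) :
    4 * ((k + m) * 2 ^ m) ≤ 2 ^ (k + m) :=
  calc 4 * ((k + m) * 2 ^ m) = 4 * (k + m) * 2 ^ m := by ring
    _ ≤ 32 * s * 2 ^ m := Nat.mul_le_mul_right _ (by omega)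
    _ = 2 ^ (k + m) := by rw [pow_add, hk]

theorem sixteen_mul_mul_two_pow_le {n s : ℕ} (hn : 2 * s + 9 ≤ n) :
    16 * (s * (32 * 2 ^ s)) ≤ 2 ^ n :=
  calc 16 * (s * (32 * 2 ^ s)) ≤ 16 * (2 ^ s * (32 * 2 ^ s)) := by
        gcongr
        exact Nat.lt_two_pow_self.le
    _ = 2 ^ (2 * s + 9) := by ring
    _ ≤ 2 ^ n := Nat.pow_le_pow_right two_pos hn

-- The low part has `b + 5` variables with `2 ^ b` between `n / 8` and `n / 4`; its monomials are
-- split into `32` groups of `2 ^ b`. The constant `32` makes the three blocks of `n * 2 ^ m` lines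
-- fit into three quarters of the `2 ^ n` lines.
theorem dsh_two_pow_le {n : ℕ} (hn : 2 ^ 12 ≤ n) : Dsh n (2 ^ n) ≤ 3 * n := by
  obtain ⟨b, hb, hsn, hns⟩ := exists_two_pow_mul_four_le_lt_mul_eight hn
  have hdepth := sq_add_le_two_pow hb
  rw [pow_succ 2 b] at hdepth
  obtain ⟨s, hs⟩ : ∃ s, s = 2 ^ b := ⟨_, rfl⟩
  rw [← hs] at hsn hns hdepth
  obtain ⟨m, rfl⟩ : ∃ m, n = b + 5 + m := Nat.exists_eq_add_of_le (by nlinarith)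
  have hk : 2 ^ (b + 5) = 32 * s := by rw [pow_add, hs, mul_comm]; rfl
  have hcoeff := four_mul_mul_two_pow_le hk (hns.le.trans_eq (mul_comm s 8))
  have htable := sixteen_mul_mul_two_pow_le (s := s) (n := b + 5 + m) (by omega)
  have hentry : 32 * 2 ^ s ≤ s * (32 * 2 ^ s) := Nat.le_mul_of_pos_left _ (by omega)
  have hmonomial : 2 * 2 ^ (b + 5) ≤ s * (32 * 2 ^ s) := by
    rw [hk]
    nlinarith [Nat.le_self_pow (show s ≠ 0 by omega) 2]
  have hL₁ : s * (32 * 2 ^ s) < 2 ^ (b + 5 + s + 1) := by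
    rw [pow_succ, pow_add, hk]
    have : 0 < s * 2 ^ s := by rw [hs]; positivity
    linarith
  refine dsh_le_of_computes fun f =>
    (computes_of_split (L₂ := b + 5 + m) hk rfl hL₁ ?_ f).mono ?_ ?_
  · rw [Fintype.card_fin]
    omega
  · change (b + 6) ^ 2 + _ + _ + _ ≤ _
    omega
  · rw [Fintype.card_fin, add_mul, one_mul]
    omega

/-- There is a sequence `q₁(n) ~ 2ⁿ` such that `D(n, q₁(n)) ≲ 3n`. -/
theorem depth_upper_with_memory_3n :
    ∃ q₁ : ℕ → ℕ,
      AsympEquiv (fun n => (q₁ n : ℝ)) (fun n => (2 : ℝ) ^ n) ∧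
      AsympLE (fun n => (Dsh n (q₁ n) : ℝ)) (fun n => 3 * (n : ℝ)) := by
  refine ⟨fun n => 2 ^ n, ?_, ?_⟩
  · have hratio (n : ℕ) : ((2 ^ n : ℕ) : ℝ) / 2 ^ n = 1 := by
      rw [Nat.cast_pow, Nat.cast_ofNat, div_self (by positivity)]
    simp only [AsympEquiv, hratio, tendsto_const_nhds]
  · refine limsup_le_of_le (isCoboundedUnder_le_of_le atTop (x := 0) fun n => by positivity) ?_
    filter_upwards [eventually_ge_atTop (2 ^ 12)] with n hn
    exact div_le_one_of_le₀ (mod_cast dsh_two_pow_le hn) (by positivity)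

end Rev
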